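/- For every n ≥ 1, the type D Chan-Robbins-Yuen polytope CRYD_{n+1} = F_{K^D_{n+1}}(2,0,…,0) has exactly 3^n - 2^n vertices. -/

import Mathlib

/-- Edges of the complete signed graph `K^D_{n+1}`: a pair `i < j` together with a
sign (`true` = positive edge, `false` = negative edge). -/
abbrev EdgeD (n : ℕ) := {p : Fin (n + 1) × Fin (n + 1) // p.1 < p.2} × Bool

/-- The type `C`/`D` root associated to an edge: `e_i - e_j` for a negative edge and
`e_i + e_j` for a positive edge. -/
def rootD (n : ℕ) (e : EdgeD n) : Fin (n + 1) → ℝ := fun k =>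
  (if k = e.1.1.1 then 1 else 0) + (if k = e.1.1.2 then (if e.2 then 1 else -1) else 0)

/-- The type `D` Chan-Robbins-Yuen polytope `CRYD_{n+1} = F_{K^D_{n+1}}(2,0,…,0)`. -/
def CRYD (n : ℕ) : Set (EdgeD n → ℝ) :=
  {b | (∀ e, 0 ≤ b e) ∧
    (∑ e, b e • rootD n e) = fun k => if k = 0 then (2 : ℝ) else 0}

open Classical in
/-- Flow on an edge of given sign, extended by zero. -/
noncomputable def CD.fl {n : ℕ} (b : EdgeD n → ℝ) (s : Bool) (i j : Fin (n + 1)) : ℝ :=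
  if h : i < j then b (⟨(i, j), h⟩, s) else 0

namespace CD

variable {n : ℕ}

lemma fl_edge (b : EdgeD n → ℝ) (e : EdgeD n) : fl b e.2 e.1.1.1 e.1.1.2 = b e := by
  obtain ⟨⟨⟨i, j⟩, h⟩, s⟩ := e
  simp only [fl]
  exact dif_pos h

lemma fl_ext {b c : EdgeD n → ℝ} (h : ∀ s i j, fl b s i j = fl c s i j) : b = c := by
  funext e
  rw [← fl_edge b, ← fl_edge c, h]

lemma sum_subtype_edge (f : Fin (n + 1) → Fin (n + 1) → ℝ) :
    ∑ p : {p : Fin (n + 1) × Fin (n + 1) // p.1 < p.2}, f p.1.1 p.1.2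
      = ∑ i, ∑ j, if i < j then f i j else 0 := by
  rw [← Fintype.sum_prod_type' (f := fun i j => if i < j then f i j else 0)]
  rw [← Finset.sum_filter]
  symm
  exact Finset.sum_subtype _ (by simp) (fun p : Fin (n+1) × Fin (n+1) => f p.1 p.2)

/-- Netflow at `k`. -/
noncomputable def net (b : EdgeD n → ℝ) (k : Fin (n + 1)) : ℝ :=
  (∑ j, fl b false k j) + (∑ j, fl b true k j) + (∑ i, fl b true i k) - ∑ i, fl b false i k

lemma sum_sign (b : EdgeD n → ℝ) (s : Bool) (k : Fin (n + 1)) :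
    ∑ p : {p : Fin (n + 1) × Fin (n + 1) // p.1 < p.2}, b (p, s) * rootD n (p, s) k
      = (∑ j, fl b s k j) + (if s then 1 else -1) * ∑ i, fl b s i k := by
  have h1 : ∀ p : {p : Fin (n + 1) × Fin (n + 1) // p.1 < p.2},
      b (p, s) * rootD n (p, s) k = fl b s p.1.1 p.1.2 *
        ((if k = p.1.1 then 1 else 0) + (if k = p.1.2 then (if s then 1 else -1) else 0)) := by
    intro p
    rw [← fl_edge b (p, s)]; rfl
  rw [Finset.sum_congr rfl (fun p _ => h1 p)]
  rw [sum_subtype_edge (fun i j => fl b s i j *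
        ((if k = i then 1 else 0) + (if k = j then (if s then 1 else -1) else 0)))]
  have h2 : ∀ i j : Fin (n+1), (if i < j then fl b s i j *
        ((if k = i then 1 else 0) + (if k = j then (if s then 1 else -1) else 0)) else 0)
      = (if k = i then fl b s i j else 0) +
        (if k = j then (if s then 1 else -1) * fl b s i j else 0) := by
    intro i j
    by_cases h : i < j
    · rw [if_pos h]; split_ifs <;> ring
    · rw [if_neg h]; simp [fl, h]
  simp_rw [h2, Finset.sum_add_distrib]
  congr 1
  · rw [Finset.sum_comm]; simp
  · rw [Finset.mul_sum]; simp

lemma sum_root (b : EdgeD n → ℝ) (k : Fin (n + 1)) :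
    (∑ e, b e • rootD n e) k = net b k := by
  simp only [Finset.sum_apply, Pi.smul_apply, smul_eq_mul]
  rw [Fintype.sum_prod_type_right]
  rw [Fintype.sum_bool, sum_sign, sum_sign]
  simp [net]; ring

lemma mem_iff (b : EdgeD n → ℝ) : b ∈ CRYD n ↔
    (∀ s i j, 0 ≤ fl b s i j) ∧ ∀ k, net b k = if k = 0 then 2 else 0 := by
  unfold CRYD
  simp only [Set.mem_ofPred_eq, funext_iff, sum_root]
  refine and_congr_left fun _ => ⟨fun h s i j => ?_, fun h e => ?_⟩
  · unfold fl; split_ifs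
    · exact h _
    · exact le_rfl
  · rw [← fl_edge b e]; exact h _ _ _

lemma fl_comb (b c : EdgeD n → ℝ) (t u : ℝ) (s : Bool) (i j : Fin (n + 1)) :
    fl (t • b + u • c) s i j = t * fl b s i j + u * fl c s i j := by
  unfold fl; split_ifs <;> simp

lemma net_comb (b c : EdgeD n → ℝ) (t u : ℝ) (k : Fin (n + 1)) :
    net (t • b + u • c) k = t * net b k + u * net c k := by
  unfold net
  simp only [fl_comb, Finset.sum_add_distrib, ← Finset.mul_sum]
  ring

/-- consecutive elements -/
def Cons (P : Finset (Fin (n + 1))) (i j : Fin (n + 1)) : Prop :=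
  i ∈ P ∧ j ∈ P ∧ i < j ∧ ∀ l, i < l → l < j → l ∉ P

def IsMx (P : Finset (Fin (n + 1))) (i : Fin (n + 1)) : Prop := i ∈ P ∧ ∀ j ∈ P, j ≤ i

def Good (P Q : Finset (Fin (n + 1))) : Prop :=
  0 ∈ P ∧ 0 ∈ Q ∧ ∃ p ∈ P, (∀ k < p, k ∈ P ↔ k ∈ Q) ∧ ∀ k, p ≤ k → k ∈ P → k ∉ Q

open Classical in
/-- The vertex attached to a pair. -/
noncomputable def vx (P Q : Finset (Fin (n + 1))) : EdgeD n → ℝ := fun e =>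
  if e.2 then (if (IsMx P e.1.1.1 ∧ IsMx Q e.1.1.2) ∨ (IsMx Q e.1.1.1 ∧ IsMx P e.1.1.2)
    then 1 else 0)
  else (if Cons P e.1.1.1 e.1.1.2 then 1 else 0) + (if Cons Q e.1.1.1 e.1.1.2 then 1 else 0)

open Classical in
lemma fl_vx_false (P Q : Finset (Fin (n + 1))) (i j : Fin (n + 1)) :
    fl (vx P Q) false i j = (if Cons P i j then 1 else 0) + (if Cons Q i j then 1 else 0) := by
  unfold fl
  by_cases h : i < j
  · simp [h, vx]
  · have : ∀ R : Finset (Fin (n + 1)), ¬ Cons R i j := fun R hR => h hR.2.2.1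
    simp [h, this]

open Classical in
lemma fl_vx_true (P Q : Finset (Fin (n + 1))) (i j : Fin (n + 1)) :
    fl (vx P Q) true i j = if i < j ∧ ((IsMx P i ∧ IsMx Q j) ∨ (IsMx Q i ∧ IsMx P j))
      then 1 else 0 := by
  unfold fl
  by_cases h : i < j <;> simp [h, vx]

lemma vx_comm (P Q : Finset (Fin (n + 1))) : vx P Q = vx Q P := by
  classical
  apply fl_ext
  intro s i j
  cases s
  · rw [fl_vx_false, fl_vx_false, add_comm]
  · rw [fl_vx_true, fl_vx_true]
    simp only [or_comm]

lemma IsMx.eq {P : Finset (Fin (n + 1))} {i j : Fin (n + 1)} (h : IsMx P i) (h' : IsMx P j) :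
    i = j := le_antisymm (h'.2 _ h.1) (h.2 _ h'.1)

lemma exists_mx {P : Finset (Fin (n + 1))} (h : 0 ∈ P) : ∃ m, IsMx P m :=
  ⟨P.max' ⟨0, h⟩, P.max'_mem _, fun j hj => P.le_max' j hj⟩

lemma Cons.left_unique {P : Finset (Fin (n + 1))} {i i' j : Fin (n + 1)} (h : Cons P i j)
    (h' : Cons P i' j) : i = i' := by
  rcases lt_trichotomy i i' with hl | hl | hl
  · exact absurd h'.1 (h.2.2.2 _ hl h'.2.2.1)
  · exact hl
  · exact absurd h.1 (h'.2.2.2 _ hl h.2.2.1)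

lemma Cons.right_unique {P : Finset (Fin (n + 1))} {i j j' : Fin (n + 1)} (h : Cons P i j)
    (h' : Cons P i j') : j = j' := by
  rcases lt_trichotomy j j' with hl | hl | hl
  · exact absurd h.2.1 (h'.2.2.2 _ h.2.2.1 hl)
  · exact hl
  · exact absurd h'.2.1 (h.2.2.2 _ h'.2.2.1 hl)

lemma exists_cons_left {P : Finset (Fin (n + 1))} (h0 : 0 ∈ P) {k : Fin (n + 1)} (hk : k ∈ P)
    (hk0 : k ≠ 0) : ∃ i, Cons P i k := by
  have hne : (P.filter (· < k)).Nonempty := ⟨0, by simp [h0, Fin.pos_iff_ne_zero, hk0]⟩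
  have hm := (P.filter (· < k)).max'_mem hne
  rw [Finset.mem_filter] at hm
  refine ⟨(P.filter (· < k)).max' hne, hm.1, hk, hm.2, fun l h1 h2 h3 => ?_⟩
  exact absurd ((P.filter (· < k)).le_max' l (by simp [h2, h3])) (not_le.2 h1)

lemma exists_cons_right {P : Finset (Fin (n + 1))} {k : Fin (n + 1)} (hk : k ∈ P)
    (hm : ¬ IsMx P k) : ∃ j, Cons P k j := by
  have hne : (P.filter (k < ·)).Nonempty := by
    unfold IsMx at hm
    push Not at hm
    obtain ⟨j, hj, hj'⟩ := hm hk
    exact ⟨j, by simp [hj, hj']⟩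
  have hm := (P.filter (k < ·)).min'_mem hne
  rw [Finset.mem_filter] at hm
  refine ⟨(P.filter (k < ·)).min' hne, hk, hm.1, hm.2, fun l h1 h2 h3 => ?_⟩
  exact absurd ((P.filter (k < ·)).min'_le l (by simp [h1, h3])) (not_le.2 h2)

open Classical in
lemma sum_cons_left {P : Finset (Fin (n + 1))} (h0 : 0 ∈ P) (k : Fin (n + 1)) :
    (∑ i, if Cons P i k then (1 : ℝ) else 0) = if k ∈ P ∧ k ≠ 0 then 1 else 0 := by
  split_ifs with h
  · obtain ⟨i, hi⟩ := exists_cons_left h0 h.1 h.2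
    have : ∀ l, Cons P l k ↔ l = i := fun l => ⟨fun hl => hl.left_unique hi, fun e => e ▸ hi⟩
    simp [this]
  · refine Finset.sum_eq_zero fun i _ => if_neg fun hc => h ⟨hc.2.1, ?_⟩
    rintro rfl
    exact absurd hc.2.2.1 (Fin.not_lt_zero _)

open Classical in
lemma sum_cons_right {P : Finset (Fin (n + 1))} (k : Fin (n + 1)) :
    (∑ j, if Cons P k j then (1 : ℝ) else 0) = if k ∈ P ∧ ¬ IsMx P k then 1 else 0 := by
  split_ifs with h
  · obtain ⟨i, hi⟩ := exists_cons_right h.1 h.2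
    have : ∀ l, Cons P k l ↔ l = i := fun l => ⟨fun hl => hl.right_unique hi, fun e => e ▸ hi⟩
    simp [this]
  · refine Finset.sum_eq_zero fun i _ => if_neg fun hc => h ⟨hc.1, fun hm => ?_⟩
    exact absurd (hm.2 _ hc.2.1) (not_le.2 hc.2.2.1)

lemma Good.mx_ne {P Q : Finset (Fin (n + 1))} (h : Good P Q) {m m' : Fin (n + 1)}
    (hm : IsMx P m) (hm' : IsMx Q m') : m ≠ m' := by
  rintro rfl
  obtain ⟨-, -, p, hp, -, h2⟩ := h
  exact h2 m (hm.2 p hp) hm.1 hm'.1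

lemma Good.cons_eq {P Q : Finset (Fin (n + 1))} (h : Good P Q) {i i' k : Fin (n + 1)}
    (hi : Cons P i k) (hi' : Cons Q i' k) : i = i' := by
  obtain ⟨-, -, p, hp, h1, h2⟩ := h
  have hk : k < p := by
    by_contra hk
    exact h2 k (not_lt.1 hk) hi.2.1 hi'.2.1
  have : Cons P i' k :=
    ⟨(h1 _ (hi'.2.2.1.trans hk)).2 hi'.1, hi.2.1, hi'.2.2.1, fun l hl hl' hlP =>
      hi'.2.2.2 l hl hl' ((h1 _ (hl'.trans hk)).1 hlP)⟩
  exact hi.left_unique this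

lemma Good.vx_mem {P Q : Finset (Fin (n + 1))} (h : Good P Q) : vx P Q ∈ CRYD n := by
  classical
  rw [mem_iff]
  constructor
  · intro s i j
    cases s
    · rw [fl_vx_false]; positivity
    · rw [fl_vx_true]; positivity
  · intro k
    obtain ⟨m, hm⟩ := exists_mx h.1
    obtain ⟨m', hm'⟩ := exists_mx h.2.1
    have hne := h.mx_ne hm hm'
    have hP : ∀ i, IsMx P i ↔ i = m := fun i => ⟨fun hi => hi.eq hm, fun e => e ▸ hm⟩
    have hQ : ∀ i, IsMx Q i ↔ i = m' := fun i => ⟨fun hi => hi.eq hm', fun e => e ▸ hm'⟩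
    have hpos : (∑ j, fl (vx P Q) true k j) + (∑ i, fl (vx P Q) true i k)
        = (if k = m then 1 else 0) + (if k = m' then 1 else 0) := by
      rw [← Finset.sum_add_distrib]
      have : ∀ j, fl (vx P Q) true k j + fl (vx P Q) true j k
          = (if j = m' then (if k = m then 1 else 0) else 0)
            + (if j = m then (if k = m' then 1 else 0) else 0) := by
        intro j
        rw [fl_vx_true, fl_vx_true]
        simp only [hP, hQ]
        rcases lt_trichotomy k j with hl | hl | hl
        · have := hl.not_gt
          by_cases a : k = m <;> by_cases b : k = m' <;> by_cases c : j = m <;>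
            by_cases d : j = m' <;> simp_all
        · subst hl
          by_cases a : k = m <;> by_cases b : k = m' <;> simp_all
        · have := hl.not_gt
          by_cases a : k = m <;> by_cases b : k = m' <;> by_cases c : j = m <;>
            by_cases d : j = m' <;> simp_all
      simp [this, Finset.sum_add_distrib]
    unfold net
    rw [add_assoc (∑ j, fl (vx P Q) false k j), hpos]
    simp only [fl_vx_false, Finset.sum_add_distrib, sum_cons_left h.1, sum_cons_left h.2.1,
      sum_cons_right, hP, hQ]
    have e1 := hm.1
    have e2 := hm'.1
    have e3 := h.1
    have e4 := h.2.1
    have g : ∀ (R : Finset (Fin (n+1))) (r : Fin (n+1)), 0 ∈ R → r ∈ R →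
        (if k ∈ R ∧ ¬ k = r then (1:ℝ) else 0) + (if k = r then 1 else 0)
          - (if k ∈ R ∧ k ≠ 0 then 1 else 0) = if k = 0 then 1 else 0 := by
      intro R r h0 hr
      by_cases a : k = 0 <;> by_cases b : k = r <;> by_cases c : k ∈ R <;> simp_all
    have g1 := g P m e3 e1
    have g2 := g Q m' e4 e2
    have : (if k = 0 then (2:ℝ) else 0) = (if k = 0 then 1 else 0) + (if k = 0 then 1 else 0) := by
      split_ifs <;> norm_num
    rw [this]
    linarith

lemma Good.unique {P Q : Finset (Fin (n + 1))} (h : Good P Q) {x : EdgeD n → ℝ}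
    (hx : x ∈ CRYD n) (hs : ∀ s i j, fl (vx P Q) s i j = 0 → fl x s i j = 0) : x = vx P Q := by
  classical
  obtain ⟨m, hm⟩ := exists_mx h.1
  obtain ⟨m', hm'⟩ := exists_mx h.2.1
  have hne := h.mx_ne hm hm'
  have hv := (mem_iff _).1 h.vx_mem
  have hx' := (mem_iff _).1 hx
  -- the coefficient
  obtain ⟨c, hc⟩ : ∃ c : ℝ, ∀ i j, fl x true i j = c * fl (vx P Q) true i j := by
    rcases lt_or_gt_of_ne hne with hl | hl
    · refine ⟨fl x true m m', fun i j => ?_⟩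
      by_cases h0 : fl (vx P Q) true i j = 0
      · rw [h0, hs _ _ _ h0, mul_zero]
      · rw [fl_vx_true] at h0 ⊢
        simp only [ite_eq_right_iff, one_ne_zero, imp_false, not_not] at h0
        rw [if_pos h0, mul_one]
        rcases h0.2 with ⟨a, b⟩ | ⟨a, b⟩
        · rw [a.eq hm, b.eq hm']
        · rw [a.eq hm', b.eq hm] at h0
          exact absurd h0.1 hl.not_gt
    · refine ⟨fl x true m' m, fun i j => ?_⟩
      by_cases h0 : fl (vx P Q) true i j = 0
      · rw [h0, hs _ _ _ h0, mul_zero]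
      · rw [fl_vx_true] at h0 ⊢
        simp only [ite_eq_right_iff, one_ne_zero, imp_false, not_not] at h0
        rw [if_pos h0, mul_one]
        rcases h0.2 with ⟨a, b⟩ | ⟨a, b⟩
        · rw [a.eq hm, b.eq hm'] at h0
          exact absurd h0.1 hl.not_gt
        · rw [a.eq hm', b.eq hm]
  set z : EdgeD n → ℝ := (1 : ℝ) • x + (-c) • vx P Q with hz
  have zt : ∀ i j, fl z true i j = 0 := by
    intro i j
    rw [hz, fl_comb, hc]; ring
  have znet : ∀ k, net z k = (1 - c) * if k = 0 then 2 else 0 := by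
    intro k
    rw [hz, net_comb, hv.2, hx'.2]; ring
  have zs : ∀ i j, fl (vx P Q) false i j = 0 → fl z false i j = 0 := by
    intro i j h0
    rw [hz, fl_comb, h0, hs _ _ _ h0]; ring
  have vtree : ∀ i i' k, fl (vx P Q) false i k ≠ 0 → fl (vx P Q) false i' k ≠ 0 → i = i' := by
    intro i i' k h1 h2
    rw [fl_vx_false] at h1 h2
    have h1' : Cons P i k ∨ Cons Q i k := by
      by_contra hh; push Not at hh; simp [hh.1, hh.2] at h1
    have h2' : Cons P i' k ∨ Cons Q i' k := by
      by_contra hh; push Not at hh; simp [hh.1, hh.2] at h2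
    rcases h1' with a | a <;> rcases h2' with b | b
    · exact a.left_unique b
    · exact h.cons_eq a b
    · exact (h.cons_eq b a).symm
    · exact a.left_unique b
  have zf : ∀ k i, fl z false i k = 0 := by
    intro k
    induction k using WellFoundedGT.induction with
    | ind k ih =>
      intro i
      by_contra hi
      have hlt : i < k := by
        by_contra hlt
        exact hi (by unfold fl; rw [dif_neg hlt])
      have hk0 : k ≠ 0 := Fin.pos_iff_ne_zero.1 (lt_of_le_of_lt (Fin.zero_le _) hlt)
      have hn := znet k
      unfold net at hn
      have hout : ∑ j, fl z false k j = 0 := by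
        refine Finset.sum_eq_zero fun j _ => ?_
        by_cases hj : k < j
        · exact ih j hj k
        · unfold fl; rw [dif_neg hj]
      have hin : ∑ l, fl z false l k = fl z false i k := by
        refine Finset.sum_eq_single i (fun l _ hl => ?_) (by simp)
        apply zs
        by_contra h1
        exact hl (vtree _ _ _ h1 (fun h2 => hi (zs _ _ h2)))
      simp only [zt, hout, hin, hk0, if_false, Finset.sum_const_zero] at hn
      apply hi
      linarith
  have hc1 : c = 1 := by
    have := znet 0
    unfold net at this
    simp only [zt, zf, if_true, Finset.sum_const_zero] at this
    linarith
  apply fl_ext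
  intro s i j
  have : fl z s i j = 0 := by
    cases s
    · exact zf _ _
    · exact zt _ _
  rw [hz, fl_comb, hc1] at this
  linarith

lemma Good.vx_extreme {P Q : Finset (Fin (n + 1))} (h : Good P Q) :
    vx P Q ∈ (CRYD n).extremePoints ℝ := by
  rw [mem_extremePoints]
  refine ⟨h.vx_mem, ?_⟩
  have key : ∀ x ∈ CRYD n, ∀ y ∈ CRYD n, vx P Q ∈ openSegment ℝ x y → x = vx P Q := by
    rintro x hx y hy ⟨a, b, ha, hb, -, hab⟩
    apply h.unique hx
    intro s i j h0
    rw [← hab, fl_comb] at h0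
    have h1 := ((mem_iff _).1 hx).1 s i j
    have h2 := ((mem_iff _).1 hy).1 s i j
    have h3 : 0 ≤ b * fl y s i j := by positivity
    have h4 : 0 ≤ a * fl x s i j := by positivity
    have h5 : a * fl x s i j = 0 := by linarith
    exact (mul_eq_zero.1 h5).resolve_left ha.ne'
  intro x hx y hy hxy
  exact ⟨key x hx y hy hxy, key y hy x hx (by rwa [openSegment_symm])⟩

lemma exists_eps (b v : EdgeD n → ℝ) (hb : ∀ s i j, 0 ≤ fl b s i j)
    (hs : ∀ s i j, fl b s i j = 0 → fl v s i j = 0) :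
    ∃ ε : ℝ, 0 < ε ∧ ε < 1 ∧ ∀ s i j, ε * fl v s i j ≤ fl b s i j := by
  have h1 : ∀ᶠ ε : ℝ in nhdsWithin 0 (Set.Ioi 0), ∀ s i j, ε * fl v s i j ≤ fl b s i j := by
    simp only [Filter.eventually_all]
    intro s i j
    by_cases h0 : fl b s i j = 0
    · rw [h0, hs _ _ _ h0]; simp
    · have hpos : 0 < fl b s i j := lt_of_le_of_ne (hb _ _ _) (Ne.symm h0)
      apply Filter.Eventually.filter_mono nhdsWithin_le_nhds
      have ht : Filter.Tendsto (fun ε : ℝ => ε * fl v s i j) (nhds 0) (nhds (0 * fl v s i j)) :=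
        Filter.Tendsto.mul_const _ Filter.tendsto_id
      rw [zero_mul] at ht
      exact (ht.eventually (gt_mem_nhds hpos)).mono fun _ h => le_of_lt h
  have h2 : ∀ᶠ ε : ℝ in nhdsWithin 0 (Set.Ioi 0), ε ∈ Set.Ioo (0 : ℝ) 1 :=
    Ioo_mem_nhdsGT one_pos
  obtain ⟨ε, ha, hb⟩ := (h1.and h2).exists
  exact ⟨ε, hb.1, hb.2, ha⟩

lemma extreme_eq {b v : EdgeD n → ℝ} (hb : b ∈ (CRYD n).extremePoints ℝ) (hv : v ∈ CRYD n)
    (hs : ∀ s i j, fl b s i j = 0 → fl v s i j = 0) : b = v := by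
  rw [mem_extremePoints] at hb
  obtain ⟨hb, hext⟩ := hb
  have hb' := (mem_iff _).1 hb
  have hv' := (mem_iff _).1 hv
  obtain ⟨ε, h0, h1, hle⟩ := exists_eps b v hb'.1 hs
  have h1' : 0 < 1 - ε := by linarith
  set y : EdgeD n → ℝ := (1 - ε)⁻¹ • b + (-((1 - ε)⁻¹ * ε)) • v with hy
  have hyP : y ∈ CRYD n := by
    rw [mem_iff]
    constructor
    · intro s i j
      rw [hy, fl_comb]
      have := hle s i j
      have : 0 ≤ (1 - ε)⁻¹ * (fl b s i j - ε * fl v s i j) :=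
        mul_nonneg (inv_pos.2 h1').le (by linarith)
      linarith
    · intro k
      rw [hy, net_comb, hb'.2, hv'.2]
      field_simp
      ring
  have := (hext v hv y hyP ⟨ε, 1 - ε, h0, h1', by ring, ?_⟩).1
  · exact this.symm
  · funext e
    simp only [hy, Pi.add_apply, Pi.smul_apply, smul_eq_mul]
    field_simp
    ring

section tree

variable (π : Fin (n + 1) → Fin (n + 1))

open Classical in
noncomputable def anc (x : Fin (n + 1)) : Finset (Fin (n + 1)) :=
  Finset.univ.filter fun k => ∃ m : ℕ, π^[m] x = k

variable {π}

lemma mem_anc {x k : Fin (n + 1)} : k ∈ anc π x ↔ ∃ m : ℕ, π^[m] x = k := by simp [anc]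

lemma anc_self (x : Fin (n + 1)) : x ∈ anc π x := mem_anc.2 ⟨0, rfl⟩

lemma anc_par {x k : Fin (n + 1)} (h : k ∈ anc π x) : π k ∈ anc π x := by
  obtain ⟨m, rfl⟩ := mem_anc.1 h
  exact mem_anc.2 ⟨m + 1, Function.iterate_succ_apply' _ _ _⟩

lemma anc_trans {x k l : Fin (n + 1)} (h : k ∈ anc π x) (h' : l ∈ anc π k) : l ∈ anc π x := by
  obtain ⟨m, rfl⟩ := mem_anc.1 h
  obtain ⟨m', rfl⟩ := mem_anc.1 h'
  exact mem_anc.2 ⟨m' + m, Function.iterate_add_apply _ _ _ _⟩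

lemma par_le (h0 : π 0 = 0) (hlt : ∀ k, k ≠ 0 → π k < k)
    (k : Fin (n + 1)) : π k ≤ k := by
  by_cases h : k = 0
  · rw [h, h0]
  · exact (hlt k h).le

lemma anc_le (h0 : π 0 = 0) (hlt : ∀ k, k ≠ 0 → π k < k)
    {x k : Fin (n + 1)} (h : k ∈ anc π x) : k ≤ x := by
  obtain ⟨m, rfl⟩ := mem_anc.1 h
  clear h
  induction m with
  | zero => exact le_rfl
  | succ m ih => rw [Function.iterate_succ_apply']; exact (par_le h0 hlt _).trans ih

lemma anc_lt (h0 : π 0 = 0) (hlt : ∀ k, k ≠ 0 → π k < k)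
    {x k : Fin (n + 1)} (h : k ∈ anc π x) (hne : k ≠ x) : k ∈ anc π (π x) := by
  obtain ⟨m, hm⟩ := mem_anc.1 h
  cases m with
  | zero => exact absurd hm.symm hne
  | succ m => exact mem_anc.2 ⟨m, by rw [← hm, Function.iterate_succ_apply]⟩

lemma anc_of_le (h0 : π 0 = 0) (hlt : ∀ k, k ≠ 0 → π k < k)
    {x k l : Fin (n + 1)} (hk : k ∈ anc π x) (hl : l ∈ anc π x) (hle : l ≤ k) :
    l ∈ anc π k := by
  obtain ⟨a, rfl⟩ := mem_anc.1 hk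
  obtain ⟨b, rfl⟩ := mem_anc.1 hl
  rcases le_total a b with h | h
  · obtain ⟨c, rfl⟩ := Nat.exists_eq_add_of_le' h
    exact mem_anc.2 ⟨c, (Function.iterate_add_apply _ _ _ _).symm⟩
  · obtain ⟨c, rfl⟩ := Nat.exists_eq_add_of_le' h
    have : π^[c + b] x ∈ anc π (π^[b] x) :=
      mem_anc.2 ⟨c, (Function.iterate_add_apply _ _ _ _).symm⟩
    have := anc_le h0 hlt this
    rw [le_antisymm hle this]
    exact anc_self _

lemma zero_anc (h0 : π 0 = 0) (hlt : ∀ k, k ≠ 0 → π k < k)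
    (x : Fin (n + 1)) : 0 ∈ anc π x := by
  induction x using WellFoundedLT.induction with
  | ind x ih =>
    by_cases h : x = 0
    · rw [h]; exact anc_self _
    · exact anc_trans (anc_par (anc_self x)) (ih _ (hlt x h))

lemma anc_cons (h0 : π 0 = 0) (hlt : ∀ k, k ≠ 0 → π k < k)
    {x i j : Fin (n + 1)} (h : Cons (anc π x) i j) : j ≠ 0 ∧ i = π j := by
  obtain ⟨h1, h2, h3, h4⟩ := h
  have hj : j ≠ 0 := Fin.pos_iff_ne_zero.1 (lt_of_le_of_lt (Fin.zero_le _) h3)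
  refine ⟨hj, ?_⟩
  have h5 : i ∈ anc π (π j) := anc_lt h0 hlt (anc_of_le h0 hlt h2 h1 h3.le) h3.ne
  by_contra hne
  exact h4 (π j) (lt_of_le_of_ne (anc_le h0 hlt h5) hne) (hlt j hj) (anc_par h2)

lemma anc_mx (h0 : π 0 = 0) (hlt : ∀ k, k ≠ 0 → π k < k)
    {x k : Fin (n + 1)} (h : IsMx (anc π x) k) : k = x :=
  le_antisymm (anc_le h0 hlt h.1) (h.2 _ (anc_self x))

lemma anc_good (h0 : π 0 = 0) (hlt : ∀ k, k ≠ 0 → π k < k)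
    {x y : Fin (n + 1)} (hne : x ≠ y) :
    Good (anc π x) (anc π y) ∨ Good (anc π y) (anc π x) := by
  classical
  have main : ∀ (x y p : Fin (n + 1)), p ∈ anc π x → p ∉ anc π y →
      (∀ k < p, k ∈ anc π x ↔ k ∈ anc π y) → Good (anc π x) (anc π y) := by
    intro x y p hp hp' hk
    refine ⟨zero_anc h0 hlt x, zero_anc h0 hlt y, p, hp, hk, fun k hpk h1 h2 => hp' ?_⟩
    exact anc_trans h2 (anc_of_le h0 hlt h1 hp hpk)
  have hex : ∃ p, ¬ (p ∈ anc π x ↔ p ∈ anc π y) := by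
    by_contra hh
    push Not at hh
    exact hne (le_antisymm (anc_le h0 hlt ((hh x).1 (anc_self x)))
      (anc_le h0 hlt ((hh y).2 (anc_self y))))
  obtain ⟨p, hp, hmin⟩ := WellFounded.has_min (wellFounded_lt (α := Fin (n + 1)))
    {p | ¬ (p ∈ anc π x ↔ p ∈ anc π y)} hex
  have hmin' : ∀ k < p, k ∈ anc π x ↔ k ∈ anc π y := by
    intro k hk
    by_contra hh
    exact hmin k hh hk
  have hp : ¬ (p ∈ anc π x ↔ p ∈ anc π y) := hp
  by_cases h1 : p ∈ anc π x
  · left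
    exact main x y p h1 (fun h2 => hp (by tauto)) hmin'
  · right
    exact main y x p (by tauto) h1 (fun k hk => (hmin' k hk).symm)

end tree

lemma fl_lt {b : EdgeD n → ℝ} {s : Bool} {i j : Fin (n + 1)} (h : fl b s i j ≠ 0) : i < j := by
  by_contra hh
  exact h (by unfold fl; rw [dif_neg hh])

lemma exists_good {b : EdgeD n → ℝ} (hb : b ∈ CRYD n) :
    ∃ P Q, Good P Q ∧ ∀ s i j, fl b s i j = 0 → fl (vx P Q) s i j = 0 := by
  classical
  obtain ⟨hnn, hnet⟩ := (mem_iff _).1 hb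
  have hsum : ∀ (f : Fin (n + 1) → ℝ), (∀ i, 0 ≤ f i) → ∀ i, f i ≤ ∑ j, f j := by
    intro f hf i
    exact Finset.single_le_sum (fun j _ => hf j) (Finset.mem_univ i)
  -- a positive edge
  have hpos : ∃ x y, fl b true x y ≠ 0 := by
    by_contra hh
    push Not at hh
    have e : ∑ k, net b k = 2 := by simp [hnet]
    unfold net at e
    simp only [hh, Finset.sum_const_zero, add_zero, Finset.sum_sub_distrib] at e
    rw [Finset.sum_comm] at e
    linarith
  obtain ⟨x, y, hxy⟩ := hpos
  have hltxy := fl_lt hxy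
  -- activity
  let Act : Fin (n + 1) → Prop := fun k => k = 0 ∨ ∃ i, fl b false i k ≠ 0
  have act_of : ∀ k, (∃ j, fl b false k j ≠ 0 ∨ fl b true k j ≠ 0 ∨ fl b true j k ≠ 0) → Act k := by
    rintro k ⟨j, hj⟩
    by_contra hk
    simp only [Act] at hk
    push Not at hk
    have e := hnet k
    unfold net at e
    simp only [hk.2, hk.1, if_false, Finset.sum_const_zero] at e
    have h1 := hsum (fun j => fl b false k j) (fun j => hnn _ _ _) j
    have h2 := hsum (fun j => fl b true k j) (fun j => hnn _ _ _) j
    have h3 := hsum (fun j => fl b true j k) (fun j => hnn _ _ _) j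
    have n1 := hnn false k j
    have n2 := hnn true k j
    have n3 := hnn true j k
    rcases hj with hj | hj | hj
    · exact hj (by linarith)
    · exact hj (by linarith)
    · exact hj (by linarith)
  let π : Fin (n + 1) → Fin (n + 1) := fun k =>
    if h : k ≠ 0 ∧ ∃ i, fl b false i k ≠ 0 then h.2.choose else 0
  have hπ : ∀ k, k ≠ 0 → Act k → fl b false (π k) k ≠ 0 := by
    intro k hk ha
    have h : k ≠ 0 ∧ ∃ i, fl b false i k ≠ 0 := ⟨hk, ha.resolve_left hk⟩
    simp only [π]
    rw [dif_pos h]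
    exact h.2.choose_spec
  have h0 : π 0 = 0 := by simp [π]
  have hlt : ∀ k, k ≠ 0 → π k < k := by
    intro k hk
    by_cases ha : Act k
    · exact fl_lt (hπ k hk ha)
    · have : π k = 0 := by
        simp only [π]
        rw [dif_neg]
        exact fun h => ha (Or.inr h.2)
      rw [this]
      exact Fin.pos_iff_ne_zero.2 hk
  have hact : ∀ z, Act z → ∀ k ∈ anc π z, Act k := by
    intro z hz k hk
    obtain ⟨m, rfl⟩ := mem_anc.1 hk
    clear hk
    induction m with
    | zero => exact hz
    | succ m ih =>
      rw [Function.iterate_succ_apply']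
      by_cases h : π^[m] z = 0
      · left; rw [h, h0]
      · exact act_of _ ⟨_, Or.inl (hπ _ h ih)⟩
  have hx : Act x := act_of x ⟨y, Or.inr (Or.inl hxy)⟩
  have hy : Act y := act_of y ⟨x, Or.inr (Or.inr hxy)⟩
  have hcons : ∀ z, Act z → ∀ i j, fl b false i j = 0 → ¬ Cons (anc π z) i j := by
    intro z hz i j hij hc
    obtain ⟨hj, rfl⟩ := anc_cons h0 hlt hc
    exact hπ j hj (hact z hz j hc.2.1) hij
  have hsupp : ∀ s i j, fl b s i j = 0 → fl (vx (anc π x) (anc π y)) s i j = 0 := by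
    intro s i j hij
    cases s
    · rw [fl_vx_false, if_neg (hcons x hx i j hij), if_neg (hcons y hy i j hij), add_zero]
    · rw [fl_vx_true, if_neg]
      rintro ⟨hl, ⟨h1, h2⟩ | ⟨h1, h2⟩⟩
      · rw [anc_mx h0 hlt h1, anc_mx h0 hlt h2] at hij
        exact hxy hij
      · rw [anc_mx h0 hlt h1, anc_mx h0 hlt h2] at hl
        exact absurd hl hltxy.not_gt
  rcases anc_good h0 hlt hltxy.ne with h | h
  · exact ⟨_, _, h, hsupp⟩
  · exact ⟨_, _, h, by rw [vx_comm]; exact hsupp⟩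

lemma inj_aux {P Q P' Q' : Finset (Fin (n + 1))} (h : Good P Q) (h' : Good P' Q')
    (e : vx P Q = vx P' Q') (k : Fin (n + 1)) (hk0 : k ≠ 0)
    (ihP : ∀ l < k, l ∈ P ↔ l ∈ P') (hP : k ∈ P)
    (hP' : k ∉ P') (hQ' : k ∈ Q') : False := by
  classical
  obtain ⟨g1, g2, p, hp, hlt, hge⟩ := h'
  have hpk : p < k := by
    by_contra hh
    rcases lt_or_eq_of_le (not_lt.1 hh) with hl | hl
    · exact hP' ((hlt k hl).2 hQ')
    · exact hP' (hl ▸ hp)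
  obtain ⟨i, hi⟩ := exists_cons_left h.1 hP hk0
  have hpi : p ≤ i := by
    by_contra hh
    exact hi.2.2.2 p (not_le.1 hh) hpk ((ihP p hpk).2 hp)
  have hne : fl (vx P' Q') false i k ≠ 0 := by
    rw [← e, fl_vx_false, if_pos hi]
    split_ifs <;> norm_num
  rw [fl_vx_false, if_neg (fun hc => hP' hc.2.1), zero_add] at hne
  have hc : Cons Q' i k := by
    by_contra hc
    exact hne (if_neg hc)
  exact hge i hpi ((ihP i hi.2.2.1).1 hi.1) hc.1

lemma vx_inj {P Q P' Q' : Finset (Fin (n + 1))} (h : Good P Q) (h' : Good P' Q')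
    (e : vx P Q = vx P' Q') : P = P' ∧ Q = Q' := by
  classical
  have main : ∀ k, (k ∈ P ↔ k ∈ P') ∧ (k ∈ Q ↔ k ∈ Q') := by
    intro k
    induction k using WellFoundedLT.induction with
    | ind k ih =>
      by_cases hk : k = 0
      · subst hk
        have := h.1
        have := h.2.1
        have := h'.1
        have := h'.2.1
        tauto
      have hin : ∑ i, fl (vx P Q) false i k = ∑ i, fl (vx P' Q') false i k := by rw [e]
      simp only [fl_vx_false, Finset.sum_add_distrib, sum_cons_left h.1, sum_cons_left h.2.1,
        sum_cons_left h'.1, sum_cons_left h'.2.1, hk, ne_eq, not_false_eq_true, and_true] at hin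
      have b1 := inj_aux h h' e k hk (fun l hl => (ih l hl).1)
      have b2 := inj_aux h' h e.symm k hk (fun l hl => (ih l hl).1.symm)
      by_cases a : k ∈ P <;> by_cases b : k ∈ Q <;> by_cases c : k ∈ P' <;>
        by_cases d : k ∈ Q' <;> simp_all <;> norm_num at hin
  exact ⟨Finset.ext fun k => (main k).1, Finset.ext fun k => (main k).2⟩

/-- Extend a word by the letter `1` at the source. -/
def wd (v : Fin n → Fin 3) : Fin (n + 1) → Fin 3 := Fin.cons 1 v

open Classical in
noncomputable def Qw (v : Fin n → Fin 3) : Finset (Fin (n + 1)) :=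
  Finset.univ.filter fun k => wd v k = 1

open Classical in
noncomputable def Pw (v : Fin n → Fin 3) : Finset (Fin (n + 1)) :=
  Finset.univ.filter fun k => wd v k = 2 ∨ (wd v k = 1 ∧ ∀ j ≤ k, wd v j ≠ 2)

lemma mem_Qw (v : Fin n → Fin 3) (k) : k ∈ Qw v ↔ wd v k = 1 := by simp [Qw]

lemma mem_Pw (v : Fin n → Fin 3) (k) :
    k ∈ Pw v ↔ wd v k = 2 ∨ (wd v k = 1 ∧ ∀ j ≤ k, wd v j ≠ 2) := by simp [Pw]

lemma good_w {v : Fin n → Fin 3} (hv : ∃ k, v k = 2) : Good (Pw v) (Qw v) := by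
  have hex : ∃ k, wd v k = 2 := by
    obtain ⟨k, hk⟩ := hv
    exact ⟨k.succ, by simpa [wd] using hk⟩
  obtain ⟨p, hp, hmin⟩ := WellFounded.has_min (wellFounded_lt (α := Fin (n + 1)))
    {p | wd v p = 2} hex
  have hp : wd v p = 2 := hp
  have hmin' : ∀ k < p, wd v k ≠ 2 := fun k hk h => hmin k h hk
  have w0 : wd v 0 = 1 := by simp [wd]
  refine ⟨?_, ?_, p, ?_, ?_, ?_⟩
  · rw [mem_Pw]
    right
    refine ⟨w0, fun j hj => ?_⟩
    rw [Fin.le_zero_iff.1 hj, w0]; decide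
  · rw [mem_Qw]; exact w0
  · rw [mem_Pw]; exact Or.inl hp
  · intro k hk
    rw [mem_Pw, mem_Qw]
    constructor
    · rintro (h | h)
      · exact absurd h (hmin' k hk)
      · exact h.1
    · intro h
      exact Or.inr ⟨h, fun j hj => hmin' j (lt_of_le_of_lt hj hk)⟩
  · intro k hk h1 h2
    rw [mem_Pw] at h1
    rw [mem_Qw] at h2
    rcases h1 with h | h
    · rw [h] at h2; exact absurd h2 (by decide)
    · exact h.2 p hk hp

lemma w_inj {v v' : Fin n → Fin 3} (hP : Pw v = Pw v') (hQ : Qw v = Qw v') : v = v' := by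
  funext k
  have h1 : ∀ u : Fin n → Fin 3, u k = 1 ↔ k.succ ∈ Qw u := by
    intro u; rw [mem_Qw]; simp [wd]
  have h2 : ∀ u : Fin n → Fin 3, u k = 2 ↔ k.succ ∈ Pw u ∧ k.succ ∉ Qw u := by
    intro u; rw [mem_Qw, mem_Pw]
    have : wd u k.succ = u k := by simp [wd]
    rw [this]
    constructor
    · intro h
      exact ⟨Or.inl h, by rw [h]; decide⟩
    · rintro ⟨h | h, h'⟩
      · exact h
      · exact absurd h.1 h'
  have e1 : v k = 1 ↔ v' k = 1 := by rw [h1, h1, hQ]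
  have e2 : v k = 2 ↔ v' k = 2 := by rw [h2, h2, hQ, hP]
  generalize v k = a at *
  generalize v' k = b at *
  revert a b
  decide

lemma w_surj {P Q : Finset (Fin (n + 1))} (h : Good P Q) :
    ∃ v : Fin n → Fin 3, (∃ k, v k = 2) ∧ Pw v = P ∧ Qw v = Q := by
  classical
  obtain ⟨g1, g2, p, hp, hlt, hge⟩ := h
  let v : Fin n → Fin 3 := fun k => if k.succ ∈ Q then 1 else if k.succ ∈ P then 2 else 0
  have hw : ∀ k, wd v k = if k ∈ Q then 1 else if k ∈ P then 2 else 0 := by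
    intro k
    refine Fin.cases ?_ (fun k => ?_) k
    · simp [wd, g2]
    · simp [wd, v]
  have w1 : ∀ k, wd v k = 1 ↔ k ∈ Q := by
    intro k; rw [hw]; by_cases a : k ∈ Q <;> by_cases b : k ∈ P <;> simp [a, b]
  have w2 : ∀ k, wd v k = 2 ↔ k ∈ P ∧ k ∉ Q := by
    intro k; rw [hw]; by_cases a : k ∈ Q <;> by_cases b : k ∈ P <;> simp [a, b]
  have hpQ := hge p le_rfl hp
  refine ⟨v, ?_, ?_, ?_⟩
  · have hp0 : p ≠ 0 := fun e => hpQ (e ▸ g2)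
    obtain ⟨q, rfl⟩ := Fin.exists_succ_eq.2 hp0
    refine ⟨q, ?_⟩
    have := (w2 q.succ).2 ⟨hp, hpQ⟩
    simpa [wd] using this
  · ext k
    rw [mem_Pw, w1, w2]
    constructor
    · rintro (h | ⟨h, h'⟩)
      · exact h.1
      · have hk : k < p := by
          by_contra hk
          exact h' p (not_lt.1 hk) ((w2 p).2 ⟨hp, hpQ⟩)
        exact (hlt k hk).2 h
    · intro hk
      by_cases hQ : k ∈ Q
      · right
        refine ⟨hQ, fun j hj hj2 => ?_⟩
        rw [w2] at hj2
        have hkp : k < p := by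
          by_contra hh
          exact hge k (not_lt.1 hh) hk hQ
        exact hj2.2 ((hlt j (lt_of_le_of_lt hj hkp)).1 hj2.1)
      · exact Or.inl ⟨hk, hQ⟩
  · ext k
    rw [mem_Qw, w1]

lemma count (n : ℕ) : {v : Fin n → Fin 3 | ∃ k, v k = 2}.ncard = 3 ^ n - 2 ^ n := by
  classical
  have h1 : {v : Fin n → Fin 3 | ∃ k, v k = 2}
      = ((Fintype.piFinset fun _ : Fin n => ({0, 1} : Finset (Fin 3)))ᶜ :
        Finset (Fin n → Fin 3)) := by
    ext v
    have : ∀ a : Fin 3, a = 2 ↔ ¬ (a = 0 ∨ a = 1) := by decide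
    simp [Fintype.mem_piFinset, this]
  rw [h1, Set.ncard_coe_finset, Finset.card_compl, Fintype.card_piFinset]
  simp

lemma extreme_eq_image (n : ℕ) : (CRYD n).extremePoints ℝ
    = (fun v => vx (Pw v) (Qw v)) '' {v : Fin n → Fin 3 | ∃ k, v k = 2} := by
  ext b
  constructor
  · intro hb
    obtain ⟨P, Q, hg, hs⟩ := exists_good hb.1
    obtain ⟨v, hv, rfl, rfl⟩ := w_surj hg
    exact ⟨v, hv, (extreme_eq hb hg.vx_mem hs).symm⟩
  · rintro ⟨v, hv, rfl⟩
    exact (good_w hv).vx_extreme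

end CD

/-- `CRYD_{n+1}` has exactly `3^n - 2^n` vertices. -/
theorem stmt6 (n : ℕ) (hn : 1 ≤ n) :
    ((CRYD n).extremePoints ℝ).ncard = 3 ^ n - 2 ^ n := by
  rw [CD.extreme_eq_image, Set.ncard_image_of_injOn, CD.count]
  intro v hv v' hv' e
  obtain ⟨h1, h2⟩ := CD.vx_inj (CD.good_w hv) (CD.good_w hv') e
  exact CD.w_inj h1 h2
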